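/- Let P be a collection of nonempty bounded open intervals of ℝ with ∪P ⊆ (a,b) for real numbers a < b. Then the following are equivalent: (1) there exists x ∈ ∪P with x > a and L_P(x) = a; (2) every outer cover of (a,b) with respect to P has a least element. -/

import Mathlib

open Set

/-- A linked list of (nonempty bounded open) intervals `(a i, b i)` of `ℝ`, indexed by a
nonempty set `S` of consecutive integers, consecutive intervals overlapping and the chain
condition `a i < b (i-1) < a (i+1) < b i` holding whenever the indices involved lie in `S`. -/
structure LinkedList where
  S : Set ℤ
  nonempty : S.Nonempty
  consecutive : ∀ i ∈ S, ∀ k ∈ S, ∀ j : ℤ, i ≤ j → j ≤ k → j ∈ S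
  a : ℤ → ℝ
  b : ℤ → ℝ
  lt : ∀ i ∈ S, a i < b i
  mono_a : ∀ i : ℤ, i ∈ S → i + 1 ∈ S → a i < a (i + 1)
  mono_b : ∀ i : ℤ, i ∈ S → i + 1 ∈ S → b i < b (i + 1)
  overlap : ∀ i : ℤ, i ∈ S → i + 1 ∈ S → a (i + 1) < b i
  gap : ∀ i : ℤ, i ∈ S → i + 2 ∈ S → b i < a (i + 2)

namespace LinkedList

/-- The `i`-th interval of the list. -/
def interval (L : LinkedList) (i : ℤ) : Set ℝ := Ioo (L.a i) (L.b i)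

/-- The union of the intervals of the list. -/
def union (L : LinkedList) : Set ℝ := ⋃ i ∈ L.S, L.interval i

/-- The list has a least element. -/
def HasLeast (L : LinkedList) : Prop := ∃ i ∈ L.S, ∀ j ∈ L.S, i ≤ j

/-- The list has a greatest element. -/
def HasGreatest (L : LinkedList) : Prop := ∃ i ∈ L.S, ∀ j ∈ L.S, j ≤ i

end LinkedList

/-- `P` is a collection of nonempty bounded open intervals of `ℝ`. -/
def IsIntervalCollection (P : Set (Set ℝ)) : Prop :=
  ∀ J ∈ P, ∃ c d : ℝ, c < d ∧ J = Ioo c d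

/-- An interval is dominated by `P` if it is contained in some member of `P`. -/
def Dominated (P : Set (Set ℝ)) (J : Set ℝ) : Prop := ∃ K ∈ P, J ⊆ K

/-- An interval is approximately dominated by `P` if it is the union of an increasing
sequence of intervals, each dominated by `P`. -/
def ApproxDominated (P : Set (Set ℝ)) (J : Set ℝ) : Prop :=
  ∃ c d : ℕ → ℝ, (∀ n, c n < d n) ∧
    (∀ n, Ioo (c n) (d n) ⊆ Ioo (c (n + 1)) (d (n + 1))) ∧
    (∀ n, Dominated P (Ioo (c n) (d n))) ∧ J = ⋃ n, Ioo (c n) (d n)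

/-- An inner cover of `(x, y)` with respect to `P`: a linked list with union `(x, y)`, each of
whose intervals is approximately dominated by `P`. -/
def IsInnerCover (P : Set (Set ℝ)) (x y : ℝ) (L : LinkedList) : Prop :=
  L.union = Ioo x y ∧ ∀ i ∈ L.S, ApproxDominated P (L.interval i)

/-- An outer cover of `(x, y)` with respect to `P`: a linked list with union `(x, y)` such that
every member of `P` is contained in some interval of the list. -/
def IsOuterCover (P : Set (Set ℝ)) (x y : ℝ) (L : LinkedList) : Prop :=
  L.union = Ioo x y ∧ ∀ J ∈ P, ∃ i ∈ L.S, J ⊆ L.interval i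

/-- `L_P(x)`: the infimum of left endpoints of members of `P` containing `x`. -/
noncomputable def leftEnd (P : Set (Set ℝ)) (x : ℝ) : ℝ :=
  sInf {c | ∃ d, Ioo c d ∈ P ∧ x ∈ Ioo c d}

/-- `R_P(x)`: the supremum of right endpoints of members of `P` containing `x`. -/
noncomputable def rightEnd (P : Set (Set ℝ)) (x : ℝ) : ℝ :=
  sSup {d | ∃ c, Ioo c d ∈ P ∧ x ∈ Ioo c d}

/-!
In a list without least element every interval has a predecessor, and intervals whose indices
differ by at least two are disjoint. So if `x` lies in the `i`-th interval of such an outer cover,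
every member of `P` containing `x` starts no further left than the `(i - 1)`-st interval, whose left
endpoint exceeds `a`; hence `a < L_P(x)`.

Conversely, if `a < L_P(x)` for all `x ∈ ⋃₀ P`, choose a sequence `u` strictly decreasing from `b`
to `a` with `u (n + 1) < L_P(u n)` whenever `u n ∈ ⋃₀ P`. A member of `P` containing `u n` then lies
to the right of `u (n + 1)`, so each member of `P` fits into one of the intervals
`(u (2n + 3), u (2n))`, and these form an outer cover without least element.
-/

open Filter Topology

section LeftEnd

variable {P : Set (Set ℝ)} {a c d x : ℝ}

theorem le_left_of_Ioo_mem (ha : a ∈ lowerBounds (⋃₀ P)) (hJ : Ioo c d ∈ P) (hcd : c < d) :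
    a ≤ c :=
  (le_isGLB_iff (isGLB_Ioo hcd)).2 fun _ hy => ha ⟨_, hJ, hy⟩

theorem leftEnd_le (hbdd : BddBelow (⋃₀ P)) (hJ : Ioo c d ∈ P) (hx : x ∈ Ioo c d) :
    leftEnd P x ≤ c := by
  obtain ⟨a, ha⟩ := hbdd
  refine csInf_le ⟨a, ?_⟩ ⟨d, hJ, hx⟩
  rintro c' ⟨d', hJ', hx'⟩
  exact le_left_of_Ioo_mem ha hJ' (hx'.1.trans hx'.2)

theorem IsIntervalCollection.le_leftEnd (hP : IsIntervalCollection P) (hx : x ∈ ⋃₀ P)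
    (h : ∀ c d, Ioo c d ∈ P → x ∈ Ioo c d → a ≤ c) : a ≤ leftEnd P x := by
  obtain ⟨J, hJ, hxJ⟩ := hx
  obtain ⟨c, d, -, rfl⟩ := hP J hJ
  refine le_csInf ⟨c, d, hJ, hxJ⟩ ?_
  rintro c' ⟨d', hJ', hx'⟩
  exact h c' d' hJ' hx'

end LeftEnd

section Sequences

theorem exists_seq_strictAnti_tendsto_lt {a b : ℝ} (hab : a < b) {s : Set ℝ} {g : ℝ → ℝ}
    (hg : ∀ x ∈ s, a < g x) :
    ∃ u : ℕ → ℝ, u 0 = b ∧ StrictAnti u ∧ Tendsto u atTop (𝓝 a) ∧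
      ∀ n, u n ∈ s → u (n + 1) < g (u n) := by
  have exists_step (x : Ioi a) : ∃ y : Ioi a, (y : ℝ) < (a + x) / 2 ∧ (↑x ∈ s → y < g x) := by
    have hmid : a < (a + x) / 2 := left_lt_add_div_two.2 x.2
    by_cases hxs : ↑x ∈ s
    · obtain ⟨y, hay, hy⟩ := exists_between (lt_min hmid (hg x hxs))
      exact ⟨⟨y, hay⟩, (lt_min_iff.1 hy).1, fun _ => (lt_min_iff.1 hy).2⟩
    · obtain ⟨y, hay, hy⟩ := exists_between hmid
      exact ⟨⟨y, hay⟩, hy, fun h => absurd h hxs⟩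
  choose f hf_mid hf_g using exists_step
  let u (n : ℕ) : Ioi a := f^[n] ⟨b, hab⟩
  have u_succ (n : ℕ) : u (n + 1) = f (u n) := Function.iterate_succ_apply' f n _
  have u_mid (n : ℕ) : (u (n + 1) : ℝ) < (a + u n) / 2 := u_succ n ▸ hf_mid (u n)
  have u_gt (n : ℕ) : a < u n := (u n).2
  have u_le (n : ℕ) : (u n : ℝ) ≤ a + (b - a) * (1 / 2) ^ n := by
    induction n with
    | zero => simp [u]
    | succ n ih => rw [pow_succ]; linarith [u_mid n]
  refine ⟨fun n => u n, rfl, strictAnti_nat_of_succ_lt fun n => ?_, ?_, fun n hn => ?_⟩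
  · linarith [u_mid n, u_gt n]
  · have hbound : Tendsto (fun n : ℕ => a + (b - a) * (1 / 2 : ℝ) ^ n) atTop (𝓝 a) := by
      simpa using (tendsto_pow_atTop_nhds_zero_of_lt_one (r := (1 / 2 : ℝ)) (by norm_num)
        (by norm_num)).const_mul (b - a) |>.const_add a
    exact tendsto_of_tendsto_of_tendsto_of_le_of_le tendsto_const_nhds hbound
      (fun n => (u_gt n).le) u_le
  · simpa only [u_succ] using hf_g (u n) hn

theorem exists_succ_lt_and_le_of_tendsto {α : Type*} [TopologicalSpace α] [LinearOrder α]
    [OrderTopology α] {v : ℕ → α} {a y : α} (hv : Tendsto v atTop (𝓝 a)) (hy : a < y) :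
    ∃ n, v (n + 1) < y ∧ (n = 0 ∨ y ≤ v n) := by
  classical
  have hex : ∃ n, v (n + 1) < y :=
    (((tendsto_add_atTop_iff_nat 1).2 hv).eventually_lt_const hy).exists
  refine ⟨Nat.find hex, Nat.find_spec hex, ?_⟩
  rcases hn : Nat.find hex with _ | m
  · exact .inl rfl
  · exact .inr (not_lt.1 (Nat.find_min hex (hn ▸ m.lt_succ_self)))

theorem exists_odd_lt_and_le_of_tendsto {α : Type*} [TopologicalSpace α] [LinearOrder α]
    [OrderTopology α] {v : ℕ → α} {a y : α} (hv : Tendsto v atTop (𝓝 a)) (hy : a < y) :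
    ∃ n, v (2 * n + 3) < y ∧ (n = 0 ∨ y ≤ v (2 * n + 1)) := by
  have hodd : StrictMono fun n : ℕ => 2 * n + 1 := fun _ _ h => by lia
  exact exists_succ_lt_and_le_of_tendsto (hv.comp hodd.tendsto_atTop) hy

end Sequences

namespace LinkedList

section General

variable {L : LinkedList} {i k : ℤ} {x : ℝ}

theorem interval_subset_union (hi : i ∈ L.S) : L.interval i ⊆ L.union :=
  subset_biUnion_of_mem hi

theorem strictMonoOn_a (L : LinkedList) : StrictMonoOn L.a L.S :=
  strictMonoOn_of_lt_add_one
    ⟨fun i hi k hk j hj => L.consecutive i hi k hk j hj.1 hj.2⟩ fun i _ => L.mono_a i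

theorem sub_one_mem_of_not_hasLeast (hL : ¬L.HasLeast) (hi : i ∈ L.S) : i - 1 ∈ L.S := by
  simp only [HasLeast, not_exists, not_and, not_forall, not_le] at hL
  obtain ⟨j, hj, hji⟩ := hL i hi
  exact L.consecutive j hj i hi _ (by lia) (by lia)

theorem le_add_one_of_mem_interval (hi : i ∈ L.S) (hk : k ∈ L.S) (hxi : x ∈ L.interval i)
    (hxk : x ∈ L.interval k) : i ≤ k + 1 := by
  by_contra! hki
  have hk2 : k + 2 ∈ L.S := L.consecutive k hk i hi _ (by lia) (by lia)
  refine lt_irrefl x ?_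
  calc
    x < L.b k := hxk.2
    _ < L.a (k + 2) := L.gap k hk hk2
    _ ≤ L.a i := L.strictMonoOn_a.monotoneOn hk2 hi (by lia)
    _ < x := hxi.1

theorem a_sub_one_le_leftEnd {P : Set (Set ℝ)} (hP : IsIntervalCollection P)
    (hcov : ∀ J ∈ P, ∃ k ∈ L.S, J ⊆ L.interval k) (hx : x ∈ ⋃₀ P) (hi : i ∈ L.S)
    (hi' : i - 1 ∈ L.S) (hxi : x ∈ L.interval i) : L.a (i - 1) ≤ leftEnd P x := by
  refine hP.le_leftEnd hx fun c d hJ hxJ => ?_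
  obtain ⟨k, hk, hJk⟩ := hcov _ hJ
  have hik : i - 1 ≤ k := sub_le_iff_le_add.2 (le_add_one_of_mem_interval hi hk hxi (hJk hxJ))
  calc
    L.a (i - 1) ≤ L.a k := L.strictMonoOn_a.monotoneOn hi' hk hik
    _ ≤ c := ((Ioo_subset_Ioo_iff (hxJ.1.trans hxJ.2)).1 hJk).1

theorem lt_a_of_sub_one_mem {a b : ℝ} (hL : L.union ⊆ Ioo a b) (hi : i ∈ L.S)
    (hi' : i - 1 ∈ L.S) : a < L.a i :=
  calc
    a ≤ L.a (i - 1) :=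
      ((Ioo_subset_Ioo_iff (L.lt _ hi')).1 ((interval_subset_union hi').trans hL)).1
    _ < L.a i := L.strictMonoOn_a hi' hi (sub_one_lt i)

end General

section OfStrictAnti

variable {u : ℕ → ℝ} {hu : StrictAnti u} {a : ℝ}

/-- The linked list without least element built from a strictly decreasing sequence `u`: its
intervals are `(u (2n + 3), u (2n))` for `n : ℕ`, the `n`-th one carrying the index `-n` because
linked lists run from left to right. -/
def ofStrictAnti (u : ℕ → ℝ) (hu : StrictAnti u) : LinkedList where
  S := Iic 0
  nonempty := nonempty_Iic
  consecutive _ _ _ hk _ _ hjk := hjk.trans hk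
  a i := u (2 * (-i).toNat + 3)
  b i := u (2 * (-i).toNat)
  lt _ _ := hu (by lia)
  mono_a _ _ hi := hu (by rw [mem_Iic] at hi; lia)
  mono_b _ _ hi := hu (by rw [mem_Iic] at hi; lia)
  overlap _ _ hi := hu (by rw [mem_Iic] at hi; lia)
  gap _ _ hi := hu (by rw [mem_Iic] at hi; lia)

theorem neg_natCast_mem_ofStrictAnti (n : ℕ) : -(n : ℤ) ∈ (ofStrictAnti u hu).S :=
  show -(n : ℤ) ≤ 0 from neg_nonpos.2 n.cast_nonneg

theorem interval_ofStrictAnti (n : ℕ) :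
    (ofStrictAnti u hu).interval (-n) = Ioo (u (2 * n + 3)) (u (2 * n)) := by
  simp only [interval, ofStrictAnti, neg_neg, Int.toNat_natCast]

theorem not_hasLeast_ofStrictAnti : ¬(ofStrictAnti u hu).HasLeast := by
  rintro ⟨i, hi, hleast⟩
  have hi' : i - 1 ∈ (ofStrictAnti u hu).S := (sub_one_lt i).le.trans hi
  exact (sub_one_lt i).not_ge (hleast _ hi')

theorem union_ofStrictAnti_eq_iUnion :
    (ofStrictAnti u hu).union = ⋃ n : ℕ, Ioo (u (2 * n + 3)) (u (2 * n)) := by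
  refine Subset.antisymm (iUnion₂_subset fun i hi => ?_) (iUnion_subset fun n => ?_)
  · obtain ⟨n, rfl⟩ := Int.exists_eq_neg_ofNat hi
    exact interval_ofStrictAnti (hu := hu) n ▸ subset_iUnion_of_subset n Subset.rfl
  · exact interval_ofStrictAnti (hu := hu) n ▸
      interval_subset_union (neg_natCast_mem_ofStrictAnti n)

theorem union_ofStrictAnti (hlim : Tendsto u atTop (𝓝 a)) :
    (ofStrictAnti u hu).union = Ioo a (u 0) := by
  rw [union_ofStrictAnti_eq_iUnion]
  refine Subset.antisymm (iUnion_subset fun n => ?_) fun x hx => mem_iUnion.2 ?_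
  · exact Ioo_subset_Ioo (hu.antitone.le_of_tendsto hlim _) (hu.antitone (Nat.zero_le _))
  · obtain ⟨n, hn, rfl | hxn⟩ := exists_odd_lt_and_le_of_tendsto hlim hx.1
    · exact ⟨0, hn, hx.2⟩
    · exact ⟨n, hn, hxn.trans_lt (hu (2 * n).lt_succ_self)⟩

theorem isOuterCover_ofStrictAnti {P : Set (Set ℝ)} (hP : IsIntervalCollection P)
    (hU : ⋃₀ P ⊆ Ioo a (u 0)) (hlim : Tendsto u atTop (𝓝 a))
    (hstep : ∀ n, u n ∈ ⋃₀ P → u (n + 1) < leftEnd P (u n)) :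
    IsOuterCover P a (u 0) (ofStrictAnti u hu) := by
  refine ⟨union_ofStrictAnti hlim, fun J hJ => ?_⟩
  obtain ⟨c, d, hcd, rfl⟩ := hP J hJ
  have hbdd : BddBelow (⋃₀ P) := bddBelow_Ioo.mono hU
  have hskip (n : ℕ) (hn : u n ∈ Ioo c d) : u (n + 1) < c :=
    (hstep n ⟨_, hJ, hn⟩).trans_le (leftEnd_le hbdd hJ hn)
  obtain ⟨hac, hdb⟩ := (Ioo_subset_Ioo_iff hcd).1 ((subset_sUnion_of_mem hJ).trans hU)
  have hac' : a < c := by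
    by_contra! hca
    obtain ⟨n, hn⟩ := (hlim.eventually_lt_const (hac.trans_lt hcd)).exists
    have hau : a ≤ u (n + 1) := hu.antitone.le_of_tendsto hlim (n + 1)
    have hcn : c < u n := (hca.trans hau).trans_lt (hu n.lt_succ_self)
    exact (hskip n ⟨hcn, hn⟩).not_ge (hca.trans hau)
  obtain ⟨n, hn, hcn⟩ := exists_odd_lt_and_le_of_tendsto hlim hac'
  refine ⟨-n, neg_natCast_mem_ofStrictAnti n, ?_⟩
  rw [interval_ofStrictAnti]
  refine Ioo_subset_Ioo hn.le ?_
  rcases hcn with rfl | hcn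
  · exact hdb
  · by_contra! hnd
    have hcu : c < u (2 * n) := hcn.trans_lt (hu (2 * n).lt_succ_self)
    exact (hskip _ ⟨hcu, hnd⟩).not_ge hcn

end OfStrictAnti

end LinkedList

theorem IsOuterCover.lt_leftEnd_of_not_hasLeast {P : Set (Set ℝ)} {a b x : ℝ} {L : LinkedList}
    (hL : IsOuterCover P a b L) (hP : IsIntervalCollection P) (hx : x ∈ ⋃₀ P)
    (hleast : ¬L.HasLeast) : a < leftEnd P x := by
  have ⟨J, hJ, hxJ⟩ := hx
  obtain ⟨i, hi, hJi⟩ := hL.2 J hJ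
  have hi₁ : i - 1 ∈ L.S := L.sub_one_mem_of_not_hasLeast hleast hi
  have hi₂ : i - 1 - 1 ∈ L.S := L.sub_one_mem_of_not_hasLeast hleast hi₁
  calc
    a < L.a (i - 1) := L.lt_a_of_sub_one_mem hL.1.subset hi₁ hi₂
    _ ≤ leftEnd P x := L.a_sub_one_le_leftEnd hP hL.2 hx hi hi₁ (hJi hxJ)

/-- For `⋃₀ P ⊆ (a, b)`: there exists `x ∈ ⋃₀ P` with `x > a` and
`L_P(x) = a` iff every outer cover of `(a, b)` with respect to `P` has a least element. -/
theorem stmt13 (P : Set (Set ℝ)) (a b : ℝ) (hab : a < b)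
    (hP : IsIntervalCollection P) (hU : ⋃₀ P ⊆ Ioo a b) :
    (∃ x ∈ ⋃₀ P, a < x ∧ leftEnd P x = a) ↔
      ∀ L : LinkedList, IsOuterCover P a b L → L.HasLeast := by
  constructor
  · rintro ⟨x, hx, -, hxa⟩ L hL
    by_contra hleast
    exact (hL.lt_leftEnd_of_not_hasLeast hP hx hleast).ne' hxa
  · contrapose!
    intro hne
    have ha : a ∈ lowerBounds (⋃₀ P) := fun x hx => (hU hx).1.le
    have hlt : ∀ x ∈ ⋃₀ P, a < leftEnd P x := fun x hx =>
      (hP.le_leftEnd hx fun _ _ hJ hxJ => le_left_of_Ioo_mem ha hJ (hxJ.1.trans hxJ.2)).lt_of_ne'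
        (hne x hx (hU hx).1)
    obtain ⟨u, rfl, hu, hlim, hstep⟩ := exists_seq_strictAnti_tendsto_lt hab hlt
    exact ⟨.ofStrictAnti u hu, LinkedList.isOuterCover_ofStrictAnti hP hU hlim hstep,
      LinkedList.not_hasLeast_ofStrictAnti⟩
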